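/- arXiv:1106.0518 — 2 statements merged into one kernel-verified Lean document; each statement's English description precedes it below -/
import Mathlib

section
/- Let f : 2^[n] → ℝ be a submodular function (not necessarily non-negative). Then for every subset X ⊆ [n] and every ρ ∈ [0,1], the uniform-noise operator satisfies T_ρf(X) ≥ ρ·f(X) + ((1−ρ)/2)·(f(∅) + f([n])). -/
/-!
Let `Z` be a random set containing each `i` independently with probability `x i`. Revealing the
elements one at a time, the expected gain `E[f (Z ∩ insert a A)] - E[f (Z ∩ A)]` is `x a` times an
average of the marginal values `f (insert a S) - f S` with `S ⊆ A`, each of which is at least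
`f (insert a A) - f A` by submodularity. If the probabilities are constantly `c` on `B \ A`, these
gains telescope to `E[f (Z ∩ B)] - E[f (Z ∩ A)] ≥ c * (f B - f A)`. For the noise distribution the
probability is `(1 + ρ) / 2` on `X` and `(1 - ρ) / 2` off `X`, and adding the bounds along the chain
`∅ ⊆ X ⊆ univ` gives the theorem.
-/

open Finset

variable {α R : Type*}

/-- Submodularity of a function on a lattice; for set functions `⊔` and `⊓` are `∪` and `∩`. -/
def Submodular [Lattice α] [Add R] [LE R] (f : α → R) : Prop :=
  ∀ a b, f (a ⊔ b) + f (a ⊓ b) ≤ f a + f b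

variable [DecidableEq α]

theorem Submodular.sub_le_insert_sub [AddCommGroup R] [PartialOrder R] [IsOrderedAddMonoid R]
    {f : Finset α → R} (hf : Submodular f) {a : α} {S A : Finset α} (hSA : S ⊆ A) (ha : a ∉ A) :
    f (insert a A) - f A ≤ f (insert a S) - f S := by
  have h := hf (insert a S) A
  rw [sup_eq_union, inf_eq_inter, insert_union, union_eq_right.2 hSA,
    insert_inter_of_notMem ha, inter_eq_left.2 hSA] at h
  exact sub_le_sub_iff.2 h

/-- The probability that a random subset of `A`, containing each `i ∈ A` independently with
probability `x i`, equals `S`; it is meaningful for `S ⊆ A`. -/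
def inclusionWeight [CommRing R] (x : α → R) (A S : Finset α) : R :=
  (∏ i ∈ S, x i) * ∏ i ∈ A \ S, (1 - x i)

/-- The multilinear extension of `f`, restricted to subsets of `A`: the expectation of `f` at a
random subset of `A` containing each `i ∈ A` independently with probability `x i`. -/
def multilinearExtension [CommRing R] (f : Finset α → R) (x : α → R) (A : Finset α) : R :=
  ∑ S ∈ A.powerset, inclusionWeight x A S * f S

section CommRing

variable [CommRing R]

theorem sum_inclusionWeight (x : α → R) (A : Finset α) :
    ∑ S ∈ A.powerset, inclusionWeight x A S = 1 := by
  simp [inclusionWeight, ← prod_add]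

theorem inclusionWeight_insert_of_notMem (x : α → R) {a : α} {A S : Finset α} (ha : a ∉ A)
    (haS : a ∉ S) : inclusionWeight x (insert a A) S = (1 - x a) * inclusionWeight x A S := by
  rw [inclusionWeight, inclusionWeight, insert_sdiff_of_notMem _ haS,
    prod_insert (by simp [ha]), mul_left_comm]

theorem inclusionWeight_insert_insert (x : α → R) {a : α} {A S : Finset α} (ha : a ∉ A)
    (haS : a ∉ S) :
    inclusionWeight x (insert a A) (insert a S) = x a * inclusionWeight x A S := by
  rw [inclusionWeight, inclusionWeight, insert_sdiff_insert, sdiff_insert_of_notMem ha,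
    prod_insert haS, mul_assoc]

@[simp]
theorem multilinearExtension_empty (f : Finset α → R) (x : α → R) :
    multilinearExtension f x ∅ = f ∅ := by
  simp [multilinearExtension, inclusionWeight]

theorem multilinearExtension_insert_sub (f : Finset α → R) (x : α → R) {a : α} {A : Finset α}
    (ha : a ∉ A) :
    multilinearExtension f x (insert a A) - multilinearExtension f x A =
      x a * ∑ S ∈ A.powerset, inclusionWeight x A S * (f (insert a S) - f S) := by
  simp only [multilinearExtension, sum_powerset_insert ha, mul_sum, ← sum_add_distrib,
    ← sum_sub_distrib]
  refine sum_congr rfl fun S hS ↦ ?_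
  have haS : a ∉ S := notMem_of_mem_powerset_of_notMem hS ha
  rw [inclusionWeight_insert_of_notMem x ha haS, inclusionWeight_insert_insert x ha haS]
  ring

theorem inclusionWeight_univ_ite [Fintype α] (p : R) (X Y : Finset α) :
    inclusionWeight (fun i ↦ if i ∈ X then p else 1 - p) univ Y =
      p ^ (Fintype.card α - #(symmDiff X Y)) * (1 - p) ^ #(symmDiff X Y) := by
  calc
    _ = ∏ i, if i ∈ Y then (if i ∈ X then p else 1 - p) else 1 - if i ∈ X then p else 1 - p := by
      rw [inclusionWeight, prod_ite (s := univ), filter_notMem_eq_sdiff, filter_mem_eq_inter,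
        univ_inter]
    _ = ∏ i, if i ∈ symmDiff X Y then 1 - p else p := by
      refine prod_congr rfl fun i _ ↦ ?_
      by_cases hX : i ∈ X <;> by_cases hY : i ∈ Y <;> simp [mem_symmDiff, hX, hY]
    _ = _ := by
      rw [prod_ite, filter_notMem_eq_sdiff, filter_mem_eq_inter, univ_inter, prod_const,
        prod_const, ← compl_eq_univ_sdiff, card_compl, mul_comm]

end CommRing

section OrderedRing

variable [CommRing R] [PartialOrder R] [IsOrderedRing R] {f : Finset α → R} {x : α → R}

theorem inclusionWeight_nonneg (hx : ∀ i, x i ∈ Set.Icc 0 1) (A S : Finset α) :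
    0 ≤ inclusionWeight x A S :=
  mul_nonneg (prod_nonneg fun i _ ↦ (hx i).1) (prod_nonneg fun i _ ↦ sub_nonneg.2 (hx i).2)

theorem Submodular.mul_insert_sub_le_multilinearExtension_insert_sub (hf : Submodular f)
    (hx : ∀ i, x i ∈ Set.Icc 0 1) {a : α} {A : Finset α} (ha : a ∉ A) :
    x a * (f (insert a A) - f A) ≤
      multilinearExtension f x (insert a A) - multilinearExtension f x A := by
  rw [multilinearExtension_insert_sub f x ha]
  refine mul_le_mul_of_nonneg_left ?_ (hx a).1
  calc
    f (insert a A) - f A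
        = ∑ S ∈ A.powerset, inclusionWeight x A S * (f (insert a A) - f A) := by
      rw [← sum_mul, sum_inclusionWeight, one_mul]
    _ ≤ ∑ S ∈ A.powerset, inclusionWeight x A S * (f (insert a S) - f S) :=
      sum_le_sum fun S hS ↦ mul_le_mul_of_nonneg_left
        (hf.sub_le_insert_sub (mem_powerset.1 hS) ha) (inclusionWeight_nonneg hx A S)

theorem Submodular.mul_sub_le_multilinearExtension_sub (hf : Submodular f)
    (hx : ∀ i, x i ∈ Set.Icc 0 1) {c : R} {A B : Finset α} (hAB : A ⊆ B)
    (hc : ∀ i ∈ B \ A, x i = c) :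
    c * (f B - f A) ≤ multilinearExtension f x B - multilinearExtension f x A := by
  suffices h : ∀ C, Disjoint A C → (∀ i ∈ C, x i = c) →
      c * (f (A ∪ C) - f A) ≤ multilinearExtension f x (A ∪ C) - multilinearExtension f x A by
    simpa only [union_sdiff_of_subset hAB] using h (B \ A) disjoint_sdiff hc
  intro C hAC hC
  induction C using Finset.induction_on with
  | empty => simp
  | insert a C haC ih =>
    rw [disjoint_insert_right] at hAC
    rw [forall_mem_insert] at hC
    have haAC : a ∉ A ∪ C := notMem_union.2 ⟨hAC.1, haC⟩
    have hgain := hf.mul_insert_sub_le_multilinearExtension_insert_sub hx haAC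
    rw [hC.1] at hgain
    rw [union_insert]
    linear_combination hgain + ih hAC.2 hC.2

/-- When `q ≤ p`, the left-hand side is the value of the Lovász extension of `f` at the point with
coordinates `p` on `X` and `q` off `X`. -/
theorem Submodular.le_multilinearExtension_univ_ite [Fintype α] (hf : Submodular f) {p q : R}
    (hp : p ∈ Set.Icc 0 1) (hq : q ∈ Set.Icc 0 1) (X : Finset α) :
    (1 - p) * f ∅ + (p - q) * f X + q * f univ ≤
      multilinearExtension f (fun i ↦ if i ∈ X then p else q) univ := by
  set x : α → R := fun i ↦ if i ∈ X then p else q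
  have hx : ∀ i, x i ∈ Set.Icc 0 1 := fun i ↦ ite_mem.2 ⟨fun _ ↦ hp, fun _ ↦ hq⟩
  have hX : p * (f X - f ∅) ≤ multilinearExtension f x X - f ∅ := by
    simpa using hf.mul_sub_le_multilinearExtension_sub hx (empty_subset X) (c := p)
      (by simp +contextual [x])
  have huniv : q * (f univ - f X) ≤
      multilinearExtension f x univ - multilinearExtension f x X :=
    hf.mul_sub_le_multilinearExtension_sub hx (subset_univ X) (by simp +contextual [x])
  linear_combination hX + huniv

end OrderedRing

theorem submodular_noise_operator_lower_bound_uniform_general {𝕜 : Type*} [Fintype α] [Field 𝕜]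
    [LinearOrder 𝕜] [IsStrictOrderedRing 𝕜] {f : Finset α → 𝕜} (hf : Submodular f)
    (X : Finset α) {ρ : 𝕜} (hρ : ρ ∈ Set.Icc (-1) 1) :
    ρ * f X + ((1 - ρ) / 2) * (f ∅ + f univ) ≤
      ∑ Y, ((1 + ρ) / 2) ^ (Fintype.card α - #(symmDiff X Y)) *
        ((1 - ρ) / 2) ^ #(symmDiff X Y) * f Y := by
  have hp : (1 + ρ) / 2 ∈ Set.Icc 0 1 := ⟨by linarith [hρ.1], by linarith [hρ.2]⟩
  have hq : (1 - ρ) / 2 = 1 - (1 + ρ) / 2 := by ring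
  calc
    _ = (1 - (1 + ρ) / 2) * f ∅ + ((1 + ρ) / 2 - (1 - (1 + ρ) / 2)) * f X
          + (1 - (1 + ρ) / 2) * f univ := by ring
    _ ≤ _ := hf.le_multilinearExtension_univ_ite hp (Set.Icc.one_sub_mem hp) X
    _ = _ := by simp only [multilinearExtension, powerset_univ, inclusionWeight_univ_ite, hq]

/-- **Pointwise noise bound for submodular functions (uniform noise).**
For a (not necessarily non-negative) submodular `f : 2^[n] → ℝ`, every `X ⊆ [n]`
and `ρ ∈ [0,1]`,
`T_ρ f(X) ≥ ρ·f(X) + ((1−ρ)/2)·(f(∅) + f([n]))`, where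
`T_ρ f(X) = Σ_Y ((1+ρ)/2)^{n−|X Δ Y|} ((1−ρ)/2)^{|X Δ Y|} f(Y)`. -/
theorem submodular_noise_operator_lower_bound_uniform
    (n : ℕ) (f : Finset (Fin n) → ℝ)
    (hsub : ∀ S T : Finset (Fin n), f (S ∪ T) + f (S ∩ T) ≤ f S + f T)
    (X : Finset (Fin n)) (ρ : ℝ) (hρ : ρ ∈ Set.Icc (0 : ℝ) 1) :
    ρ * f X + ((1 - ρ) / 2) * (f ∅ + f Finset.univ)
      ≤ ∑ Y : Finset (Fin n),
          ((1 + ρ) / 2) ^ (n - (symmDiff X Y).card) *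
            ((1 - ρ) / 2) ^ ((symmDiff X Y).card) * f Y := by
  simpa only [Fintype.card_fin] using
    submodular_noise_operator_lower_bound_uniform_general hsub X
      (Set.Icc_subset_Icc_left (by norm_num) hρ)
end

section
/- Let f : 2^[n] → ℝ be a non-negative submodular function. Then for every subset X ⊆ [n] and every ρ ∈ [0,1], the uniform-noise operator satisfies T_ρf(X) ≥ ρ·f(X). -/
/-! Write `Y = (X \ A) ∪ B`, where `A ⊆ X` and `B ⊆ Xᶜ` are independent random sets containing each
available element with probability `q = (1 - ρ) / 2`; put `p = 1 - q`. In each of `A` and `B`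
separately the value of `f` is submodular, and the mean of a submodular `h` over the random subsets
of `D` is at least `p * h ∅ + q * h D`: correlating all the coin flips perfectly only decreases the
mean. Two applications leave the four sets `X`, `∅`, `univ`, `Xᶜ` with weights `p ^ 2`, `q * p`,
`p * q`, `q ^ 2`, and `p ^ 2 = p - q + q ^ 2 ≥ p - q = ρ`. -/

open Finset
open scoped symmDiff

/-- Submodularity of a function on a lattice; on `Finset α` the lattice operations are `∪`, `∩`. -/
def IsSubmodular {L R : Type*} [Lattice L] [Add R] [LE R] (f : L → R) : Prop :=
  ∀ S T, f (S ⊔ T) + f (S ⊓ T) ≤ f S + f T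

namespace IsSubmodular

variable {L R : Type*} [LE R] {f : L → R}

lemma comp_sup_left [DistribLattice L] [Add R] (hf : IsSubmodular f) (C : L) :
    IsSubmodular fun S => f (C ⊔ S) := fun S T => by
  simpa only [← sup_sup_distrib_left, ← sup_inf_left] using hf (C ⊔ S) (C ⊔ T)

lemma comp_sup_right [DistribLattice L] [Add R] (hf : IsSubmodular f) (C : L) :
    IsSubmodular fun S => f (S ⊔ C) := by
  simpa only [sup_comm] using hf.comp_sup_left C

lemma comp_sdiff_left [GeneralizedBooleanAlgebra L] [AddCommMagma R] (hf : IsSubmodular f) (C : L) :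
    IsSubmodular fun S => f (C \ S) := fun S T => by
  simpa only [sdiff_sup, sdiff_inf, add_comm] using hf (C \ S) (C \ T)

end IsSubmodular

section BernoulliMean

variable {α R : Type*} [CommSemiring R] {p q : R}

/-- The mean of `h A` over the random subset `A` of `D` that contains each element of `D`
independently with probability `q` and omits it with probability `p`. The identity `p + q = 1` is
not built in. -/
def bernoulliMean (p q : R) (D : Finset α) (h : Finset α → R) : R :=
  ∑ A ∈ D.powerset, p ^ (#D - #A) * q ^ #A * h A

@[simp]
lemma bernoulliMean_empty (h : Finset α → R) : bernoulliMean p q ∅ h = h ∅ := by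
  simp [bernoulliMean]

lemma bernoulliMean_congr {D : Finset α} {g h : Finset α → R} (hgh : ∀ A ⊆ D, g A = h A) :
    bernoulliMean p q D g = bernoulliMean p q D h :=
  sum_congr rfl fun A hA => by rw [hgh A (mem_powerset.1 hA)]

lemma isSubmodular_bernoulliMean [PartialOrder R] [IsOrderedRing R] {L : Type*} [Lattice L]
    {F : L → Finset α → R} (hF : ∀ A, IsSubmodular fun S => F S A) (hp : 0 ≤ p) (hq : 0 ≤ q)
    (D : Finset α) : IsSubmodular fun S => bernoulliMean p q D (F S) := fun S T => by
  simp only [bernoulliMean, ← sum_add_distrib, ← mul_add]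
  refine sum_le_sum fun A _ => mul_le_mul_of_nonneg_left ?_ (by positivity)
  exact hF A S T

variable [DecidableEq α]

lemma bernoulliMean_insert {a : α} {D : Finset α} (ha : a ∉ D) (h : Finset α → R) :
    bernoulliMean p q (insert a D) h =
      p * bernoulliMean p q D h + q * bernoulliMean p q D fun A => h (insert a A) := by
  simp only [bernoulliMean, sum_powerset_insert ha, mul_sum]
  congr 1 <;> refine sum_congr rfl fun A hA => ?_ <;> rw [mem_powerset] at hA
  · rw [card_insert_of_notMem ha, Nat.sub_add_comm (card_le_card hA)]
    ring
  · rw [card_insert_of_notMem ha, card_insert_of_notMem (notMem_mono hA ha),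
      Nat.add_sub_add_right]
    ring

lemma bernoulliMean_union {D E : Finset α} (hDE : Disjoint D E) (h : Finset α → R) :
    bernoulliMean p q (D ∪ E) h =
      bernoulliMean p q D fun A => bernoulliMean p q E fun B => h (A ∪ B) := by
  induction D using Finset.induction_on generalizing h with
  | empty => simp
  | insert a D ha ih =>
    obtain ⟨haE, hDE⟩ := disjoint_insert_left.1 hDE
    have haDE : a ∉ D ∪ E := notMem_union.2 ⟨ha, haE⟩
    simp only [insert_union, bernoulliMean_insert haDE, bernoulliMean_insert ha, ih hDE]

lemma IsSubmodular.le_bernoulliMean [PartialOrder R] [IsOrderedRing R] {h : Finset α → R}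
    (hh : IsSubmodular h) (hp : 0 ≤ p) (hq : 0 ≤ q) (hpq : p + q = 1) (D : Finset α) :
    p * h ∅ + q * h D ≤ bernoulliMean p q D h := by
  induction D using Finset.induction_on generalizing h with
  | empty => simp [← add_mul, hpq]
  | insert a D ha ih =>
    have exchange : h (insert a D) + h ∅ ≤ h {a} + h D := by
      simpa [ha] using hh {a} D
    calc p * h ∅ + q * h (insert a D)
        = (p + q) * (p * h ∅ + q * h (insert a D)) := by rw [hpq, one_mul]
      _ = p * (p * h ∅) + q * (q * h (insert a D)) + p * q * (h (insert a D) + h ∅) := by ring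
      _ ≤ p * (p * h ∅) + q * (q * h (insert a D)) + p * q * (h {a} + h D) := by gcongr
      _ = p * (p * h ∅ + q * h D) + q * (p * h (insert a ∅) + q * h (insert a D)) := by
        rw [insert_empty_eq]; ring
      _ ≤ p * bernoulliMean p q D h +
          q * bernoulliMean p q D fun A => h (insert a A) := by
        gcongr
        · exact ih hh
        · exact ih (hh.comp_sup_left {a})
      _ = bernoulliMean p q (insert a D) h := (bernoulliMean_insert ha h).symm

end BernoulliMean

section NoiseOperator

lemma symmDiff_sup_of_le_of_disjoint {L : Type*} [GeneralizedBooleanAlgebra L] {X A B : L}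
    (hA : A ≤ X) (hB : Disjoint X B) : X ∆ (A ⊔ B) = X \ A ⊔ B := by
  have removed : X \ (A ⊔ B) = X \ A := by
    rw [sdiff_sup, hB.sdiff_eq_left, inf_eq_left]
    exact sdiff_le
  have added : (A ⊔ B) \ X = B := by
    rw [sup_sdiff, sdiff_eq_bot_iff.2 hA, hB.sdiff_eq_right, bot_sup_eq]
  rw [symmDiff_def, removed, added]

variable {α R : Type*} [Fintype α] [DecidableEq α]

/-- The uniform-noise operator: the mean of `f` at the random set obtained from `X` by flipping the
membership of each element independently with probability `q` and keeping it with probability `p`.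
The operator `T_ρ` is the case `p = (1 + ρ) / 2`, `q = (1 - ρ) / 2`. -/
def noiseOperator [CommSemiring R] (p q : R) (f : Finset α → R) (X : Finset α) : R :=
  ∑ Y, p ^ (Fintype.card α - #(X ∆ Y)) * q ^ #(X ∆ Y) * f Y

lemma noiseOperator_eq_bernoulliMean_symmDiff [CommSemiring R] (p q : R) (f : Finset α → R)
    (X : Finset α) : noiseOperator p q f X = bernoulliMean p q univ fun D => f (X ∆ D) := by
  rw [noiseOperator, bernoulliMean, powerset_univ, card_univ]
  refine (Fintype.sum_equiv (symmDiff_right_involutive X).toPerm _ _ fun D => ?_)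
  simp

lemma noiseOperator_eq_bernoulliMean_bernoulliMean [CommSemiring R] (p q : R)
    (f : Finset α → R) (X : Finset α) :
    noiseOperator p q f X =
      bernoulliMean p q X fun A => bernoulliMean p q Xᶜ fun B => f (X \ A ∪ B) := by
  rw [noiseOperator_eq_bernoulliMean_symmDiff, ← union_compl X,
    bernoulliMean_union disjoint_compl_right]
  exact bernoulliMean_congr fun A hA => bernoulliMean_congr fun B hB =>
    congrArg f (symmDiff_sup_of_le_of_disjoint hA (disjoint_compl_right.mono_right hB))

lemma IsSubmodular.le_noiseOperator [CommSemiring R] [PartialOrder R] [IsOrderedRing R] {p q : R}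
    {f : Finset α → R} (hf : IsSubmodular f) (hp : 0 ≤ p) (hq : 0 ≤ q) (hpq : p + q = 1)
    (X : Finset α) :
    p * (p * f X + q * f univ) + q * (p * f ∅ + q * f Xᶜ) ≤ noiseOperator p q f X := by
  set g : Finset α → R := fun A => bernoulliMean p q Xᶜ fun B => f (X \ A ∪ B)
  have g_submodular : IsSubmodular g :=
    isSubmodular_bernoulliMean (fun B => (hf.comp_sup_right B).comp_sdiff_left X) hp hq Xᶜ
  have le_g (A : Finset α) : p * f (X \ A) + q * f (X \ A ∪ Xᶜ) ≤ g A := by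
    simpa using (hf.comp_sup_left (X \ A)).le_bernoulliMean hp hq hpq Xᶜ
  calc p * (p * f X + q * f univ) + q * (p * f ∅ + q * f Xᶜ)
      ≤ p * g ∅ + q * g X := by
        gcongr
        · simpa using le_g ∅
        · simpa using le_g X
    _ ≤ bernoulliMean p q X g := g_submodular.le_bernoulliMean hp hq hpq X
    _ = noiseOperator p q f X := (noiseOperator_eq_bernoulliMean_bernoulliMean p q f X).symm

theorem nonneg_submodular_noise_operator_lower_bound_uniform_general [CommRing R] [PartialOrder R]
    [IsOrderedRing R] {p q : R} (hp : 0 ≤ p) (hq : 0 ≤ q) (hpq : p + q = 1) {f : Finset α → R}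
    (hf : IsSubmodular f) {X : Finset α}
    (hf0 : ∀ S ∈ ({∅, univ, X, Xᶜ} : Set (Finset α)), 0 ≤ f S) :
    (p - q) * f X ≤ noiseOperator p q f X := by
  obtain ⟨f_empty, f_univ, f_X, f_compl⟩ : 0 ≤ f ∅ ∧ 0 ≤ f univ ∧ 0 ≤ f X ∧ 0 ≤ f Xᶜ := by
    simpa using hf0
  have sq_decomposition : p ^ 2 = (p - q) + q ^ 2 := by linear_combination (p - q) * hpq
  calc (p - q) * f X
      ≤ (p - q) * f X + (q ^ 2 * f X + p * q * f univ + q * p * f ∅ + q ^ 2 * f Xᶜ) :=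
        le_add_of_nonneg_right (by positivity)
    _ = p * (p * f X + q * f univ) + q * (p * f ∅ + q * f Xᶜ) := by
        linear_combination -f X * sq_decomposition
    _ ≤ noiseOperator p q f X := hf.le_noiseOperator hp hq hpq X

end NoiseOperator

/-- **Pointwise noise bound for non-negative submodular functions (uniform noise).**
For a non-negative submodular `f : 2^[n] → ℝ`, every `X ⊆ [n]` and `ρ ∈ [0,1]`,
`T_ρ f(X) ≥ ρ·f(X)`, where
`T_ρ f(X) = Σ_Y ((1+ρ)/2)^{n−|X Δ Y|} ((1−ρ)/2)^{|X Δ Y|} f(Y)`. -/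
theorem nonneg_submodular_noise_operator_lower_bound_uniform
    (n : ℕ) (f : Finset (Fin n) → ℝ) (hf0 : ∀ S, 0 ≤ f S)
    (hsub : ∀ S T : Finset (Fin n), f (S ∪ T) + f (S ∩ T) ≤ f S + f T)
    (X : Finset (Fin n)) (ρ : ℝ) (hρ : ρ ∈ Set.Icc (0 : ℝ) 1) :
    ρ * f X
      ≤ ∑ Y : Finset (Fin n),
          ((1 + ρ) / 2) ^ (n - (symmDiff X Y).card) *
            ((1 - ρ) / 2) ^ ((symmDiff X Y).card) * f Y := by
  have := nonneg_submodular_noise_operator_lower_bound_uniform_general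
    (p := (1 + ρ) / 2) (q := (1 - ρ) / 2) (by linarith [hρ.1]) (by linarith [hρ.2]) (by ring)
    hsub (X := X) fun S _ => hf0 S
  simpa [noiseOperator, show (1 + ρ) / 2 - (1 - ρ) / 2 = ρ by ring] using this
end
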